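/- Let F : ℝ^m → ℝ be L-smooth and set L' = L + 1. Let (z_k) be generated by z_{k+1} = z_k + t_k s_k with ‖g_k − ∇F(z_k)‖₂ ≤ δ_k, c₁‖g_k‖₂² ≤ −g_kᵀ s_k, ‖s_k‖₂ ≤ c₂‖g_k‖₂, and δ_k ≤ β‖g_k‖₂ for some β ∈ [0, c₁/(c₂√L')). With Δ = c₁² − L' c₂² β², t̄₁ = (c₁ − √Δ)/(c₂² L'), t̄₂ = (c₁ + √Δ)/(c₂² L'), suppose γ ∈ (0, (t̄₂ − t̄₁)/2] and t_k ∈ [t̄₁ + γ, t̄₂ − γ] for all k. Then for every k, F(z_{k+1}) ≤ F(z_k) − (L' c₂² γ²/2)‖g_k‖₂²; in particular the sequence (F(z_k)) is monotonically nonincreasing. -/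

import Mathlib

open scoped RealInnerProductSpace

/-! The descent lemma bounds `F (x + t • s)` by its quadratic model at `x`. Replacing `∇F x` by `g`
costs at most `t * δ * ‖s‖ ≤ (δ ^ 2 + t ^ 2 * ‖s‖ ^ 2) / 2`, so the curvature constant becomes
`L' = L + 1`, and with `δ ≤ β * ‖g‖` the guaranteed decrease is
`(2 * c₁ * t - β ^ 2 - L' * c₂ ^ 2 * t ^ 2) / 2 * ‖g‖ ^ 2`. This concave quadratic in `t` has roots
`t̄₁` and `t̄₂`, so it factors as `L' * c₂ ^ 2 * (t - t̄₁) * (t̄₂ - t)`, and both differences are at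
least `γ`. -/

section QuadraticRoots

theorem quadratic_eq_mul_sub_roots {K : Type*} [Field K] {a b c d : K} (ha : a ≠ 0)
    (hd : d ^ 2 = b ^ 2 - a * c) (t : K) :
    2 * b * t - c - a * t ^ 2 = a * ((t - (b - d) / a) * ((b + d) / a - t)) := by
  field_simp
  linear_combination -hd

variable {a b c D γ t : ℝ}

theorem pos_and_pos_of_mem_Icc_roots (hγ : 0 < γ)
    (ht : t ∈ Set.Icc ((b - Real.sqrt D) / a + γ) ((b + Real.sqrt D) / a - γ)) :
    0 < a ∧ 0 < D := by
  have hgap : 0 < 2 * Real.sqrt D / a :=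
    calc 0 < (b + Real.sqrt D) / a - (b - Real.sqrt D) / a := by linarith [ht.1.trans ht.2]
      _ = 2 * Real.sqrt D / a := by ring
  have hnum : 0 < 2 * Real.sqrt D :=
    (by positivity : 0 ≤ 2 * Real.sqrt D).lt_of_ne' (div_ne_zero_iff.1 hgap.ne').1
  exact ⟨(div_pos_iff_of_pos_left hnum).1 hgap, Real.sqrt_pos.1 (by linarith)⟩

theorem sub_sqrt_div_nonneg (ha : 0 ≤ a) (hb : 0 ≤ b) (hc : 0 ≤ c) :
    0 ≤ (b - Real.sqrt (b ^ 2 - a * c)) / a := by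
  have hsqrt : Real.sqrt (b ^ 2 - a * c) ≤ b :=
    Real.sqrt_le_iff.2 ⟨hb, sub_le_self _ (mul_nonneg ha hc)⟩
  exact div_nonneg (sub_nonneg.2 hsqrt) ha

theorem mul_sq_le_quadratic_of_mem_Icc_roots (ha : 0 < a) (hD : 0 ≤ b ^ 2 - a * c) (hγ : 0 ≤ γ)
    (ht : t ∈ Set.Icc ((b - Real.sqrt (b ^ 2 - a * c)) / a + γ)
      ((b + Real.sqrt (b ^ 2 - a * c)) / a - γ)) :
    a * γ ^ 2 ≤ 2 * b * t - c - a * t ^ 2 := by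
  have hlower : γ ≤ t - (b - Real.sqrt (b ^ 2 - a * c)) / a := le_sub_iff_add_le'.2 ht.1
  have hupper : γ ≤ (b + Real.sqrt (b ^ 2 - a * c)) / a - t := le_sub_comm.1 ht.2
  rw [quadratic_eq_mul_sub_roots ha.ne' (Real.sq_sqrt hD), sq]
  gcongr
  exact hγ.trans hlower

end QuadraticRoots

section FirstOrderTaylor

variable {E G : Type*} [NormedAddCommGroup E] [NormedSpace ℝ E]
  [NormedAddCommGroup G] [NormedSpace ℝ G]

theorem norm_sub_sub_fderiv_le_of_lipschitz {f : E → G} {f' : E → E →L[ℝ] G} {S : Set E}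
    {x y : E} {L : ℝ} (hS : StarConvex ℝ x S) (hy : y ∈ S)
    (hf : ∀ z ∈ S, HasFDerivWithinAt f (f' z) S z)
    (hlip : ∀ z ∈ S, ‖f' z - f' x‖ ≤ L * ‖z - x‖) :
    ‖f y - f x - f' x (y - x)‖ ≤ L / 2 * ‖y - x‖ ^ 2 := by
  let path : ℝ → E := fun τ => x + τ • (y - x)
  have hpath_mem : Set.MapsTo path (Set.Icc 0 1) S := fun τ hτ =>
    hS.add_smul_sub_mem hy hτ.1 hτ.2
  have hpath (τ : ℝ) : HasDerivAt path (y - x) τ := by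
    simpa only [id, one_smul] using! ((hasDerivAt_id τ).smul_const (y - x)).const_add x
  let remainder : ℝ → G := fun τ => f (path τ) - f x - τ • f' x (y - x)
  have hremainder (τ : ℝ) (hτ : τ ∈ Set.Icc 0 1) : HasDerivWithinAt remainder
      ((f' (path τ) - f' x) (y - x)) (Set.Icc 0 1) τ := by
    have hcomp := (hf _ (hpath_mem hτ)).comp_hasDerivWithinAt τ (hpath τ).hasDerivWithinAt hpath_mem
    simpa only [id, one_smul, sub_apply] using!
      (hcomp.sub_const (f x)).sub ((hasDerivWithinAt_id τ _).smul_const (f' x (y - x)))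
  have hbound (τ : ℝ) : HasDerivAt (fun τ : ℝ => L / 2 * ‖y - x‖ ^ 2 * τ ^ 2)
      (L * ‖y - x‖ ^ 2 * τ) τ := by
    refine ((hasDerivAt_pow 2 τ).const_mul (L / 2 * ‖y - x‖ ^ 2)).congr_deriv ?_
    ring
  have hnorm (τ : ℝ) (hτ : τ ∈ Set.Ico 0 1) :
      ‖(f' (path τ) - f' x) (y - x)‖ ≤ L * ‖y - x‖ ^ 2 * τ :=
    calc ‖(f' (path τ) - f' x) (y - x)‖
        ≤ L * ‖path τ - x‖ * ‖y - x‖ := ContinuousLinearMap.le_of_opNorm_le _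
          (hlip _ (hpath_mem (Set.Ico_subset_Icc_self hτ))) _
      _ = L * ‖y - x‖ ^ 2 * τ := by
        rw [add_sub_cancel_left, norm_smul, Real.norm_of_nonneg hτ.1]
        ring
  simpa [remainder, path] using image_norm_le_of_norm_deriv_right_le_deriv_boundary
    (fun τ hτ => (hremainder τ hτ).continuousWithinAt)
    (fun τ hτ => (hremainder τ (Set.Ico_subset_Icc_self hτ)).mono_of_mem_nhdsWithin
      (Icc_mem_nhdsGE_of_mem hτ))
    (by simp [remainder, path]) hbound hnorm (Set.right_mem_Icc.2 zero_le_one)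

end FirstOrderTaylor

section InexactDescent

variable {E : Type*} [NormedAddCommGroup E] [InnerProductSpace ℝ E]

theorem inner_le_inner_add_of_norm_sub_le {v g : E} {δ : ℝ} (h : ‖g - v‖ ≤ δ) (s : E) :
    ⟪v, s⟫ ≤ ⟪g, s⟫ + δ * ‖s‖ :=
  calc ⟪v, s⟫ = ⟪g, s⟫ + ⟪v - g, s⟫ := by rw [inner_sub_left, add_sub_cancel]
    _ ≤ ⟪g, s⟫ + ‖v - g‖ * ‖s‖ := by gcongr; exact real_inner_le_norm _ _
    _ ≤ ⟪g, s⟫ + δ * ‖s‖ := by gcongr; rwa [norm_sub_rev]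

variable [CompleteSpace E] {F : E → ℝ} {x g s : E} {L c₁ c₂ β γ δ t : ℝ}

theorem le_add_inner_gradient_add_of_lipschitz (hF : Differentiable ℝ F)
    (hlip : ∀ y, ‖gradient F y - gradient F x‖ ≤ L * ‖y - x‖) (d : E) :
    F (x + d) ≤ F x + ⟪gradient F x, d⟫ + L / 2 * ‖d‖ ^ 2 := by
  have htaylor := norm_sub_sub_fderiv_le_of_lipschitz (y := x + d) (starConvex_univ x)
    (Set.mem_univ _) (fun y _ => (hF y).hasGradientAt.hasFDerivAt.hasFDerivWithinAt)
    (fun y _ => by rw [← map_sub, LinearIsometryEquiv.norm_map]; exact hlip y)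
  rw [add_sub_cancel_left, InnerProductSpace.toDual_apply_apply] at htaylor
  linarith [Real.le_norm_self (F (x + d) - F x - ⟪gradient F x, d⟫)]

theorem inexact_descent_step_le (hF : Differentiable ℝ F)
    (hlip : ∀ y, ‖gradient F y - gradient F x‖ ≤ L * ‖y - x‖) (hL : 0 ≤ L + 1) (ht : 0 ≤ t)
    (herr : ‖g - gradient F x‖ ≤ δ) (hdesc : c₁ * ‖g‖ ^ 2 ≤ -⟪g, s⟫) (hbnd : ‖s‖ ≤ c₂ * ‖g‖) :
    F (x + t • s) ≤
      F x - (c₁ * t - (L + 1) / 2 * c₂ ^ 2 * t ^ 2) * ‖g‖ ^ 2 + δ ^ 2 / 2 := by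
  have hinner : ⟪gradient F x, s⟫ ≤ -(c₁ * ‖g‖ ^ 2) + δ * ‖s‖ :=
    (inner_le_inner_add_of_norm_sub_le herr s).trans (by linarith)
  have hyoung : t * (δ * ‖s‖) ≤ δ ^ 2 / 2 + (t * ‖s‖) ^ 2 / 2 := by
    linarith [two_mul_le_add_sq δ (t * ‖s‖)]
  calc F (x + t • s)
      ≤ F x + t * ⟪gradient F x, s⟫ + L / 2 * (t * ‖s‖) ^ 2 := by
        simpa only [real_inner_smul_right, norm_smul, Real.norm_of_nonneg ht] using
          le_add_inner_gradient_add_of_lipschitz hF hlip (t • s)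
    _ ≤ F x + t * (-(c₁ * ‖g‖ ^ 2) + δ * ‖s‖) + L / 2 * (t * ‖s‖) ^ 2 := by gcongr
    _ ≤ F x - c₁ * t * ‖g‖ ^ 2 + (L + 1) / 2 * (t * ‖s‖) ^ 2 + δ ^ 2 / 2 := by
        linarith
    _ ≤ F x - c₁ * t * ‖g‖ ^ 2 + (L + 1) / 2 * (t * (c₂ * ‖g‖)) ^ 2 + δ ^ 2 / 2 := by gcongr
    _ = F x - (c₁ * t - (L + 1) / 2 * c₂ ^ 2 * t ^ 2) * ‖g‖ ^ 2 + δ ^ 2 / 2 := by ring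

theorem inexact_descent_step_le_of_mem_Icc_roots (hF : Differentiable ℝ F)
    (hlip : ∀ y, ‖gradient F y - gradient F x‖ ≤ L * ‖y - x‖) (hc₁ : 0 ≤ c₁)
    (herr : ‖g - gradient F x‖ ≤ β * ‖g‖) (hdesc : c₁ * ‖g‖ ^ 2 ≤ -⟪g, s⟫)
    (hbnd : ‖s‖ ≤ c₂ * ‖g‖) (hγ : 0 < γ)
    (ht : t ∈ Set.Icc
      ((c₁ - Real.sqrt (c₁ ^ 2 - c₂ ^ 2 * (L + 1) * β ^ 2)) / (c₂ ^ 2 * (L + 1)) + γ)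
      ((c₁ + Real.sqrt (c₁ ^ 2 - c₂ ^ 2 * (L + 1) * β ^ 2)) / (c₂ ^ 2 * (L + 1)) - γ)) :
    F (x + t • s) ≤ F x - (L + 1) * c₂ ^ 2 * γ ^ 2 / 2 * ‖g‖ ^ 2 := by
  obtain ⟨hcurv, hdiscrim⟩ := pos_and_pos_of_mem_Icc_roots hγ ht
  have hL : 0 < L + 1 := pos_of_mul_pos_right hcurv (sq_nonneg c₂)
  have ht_nonneg : 0 ≤ t :=
    (add_nonneg (sub_sqrt_div_nonneg hcurv.le hc₁ (sq_nonneg β)) hγ.le).trans ht.1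
  have hquad := mul_sq_le_quadratic_of_mem_Icc_roots hcurv hdiscrim.le hγ.le ht
  calc F (x + t • s)
      ≤ F x - (c₁ * t - (L + 1) / 2 * c₂ ^ 2 * t ^ 2) * ‖g‖ ^ 2 + (β * ‖g‖) ^ 2 / 2 :=
        inexact_descent_step_le hF hlip hL.le ht_nonneg herr hdesc hbnd
    _ = F x - (2 * c₁ * t - β ^ 2 - c₂ ^ 2 * (L + 1) * t ^ 2) / 2 * ‖g‖ ^ 2 := by ring
    _ ≤ F x - c₂ ^ 2 * (L + 1) * γ ^ 2 / 2 * ‖g‖ ^ 2 := by gcongr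
    _ = F x - (L + 1) * c₂ ^ 2 * γ ^ 2 / 2 * ‖g‖ ^ 2 := by ring

end InexactDescent

theorem stmt_5_general {E : Type*} [NormedAddCommGroup E] [InnerProductSpace ℝ E]
    [CompleteSpace E] {F : E → ℝ} {L L' : ℝ} (hdiff : Differentiable ℝ F)
    (hlip : ∀ x y, ‖gradient F x - gradient F y‖ ≤ L * ‖x - y‖) (hL' : L' = L + 1)
    {z s g : ℕ → E} {t δ : ℕ → ℝ} {c₁ c₂ : ℝ} (hc₁ : 0 < c₁)
    (hupd : ∀ k, z (k + 1) = z k + t k • s k)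
    (herr : ∀ k, ‖g k - gradient F (z k)‖ ≤ δ k)
    (hdesc : ∀ k, c₁ * ‖g k‖ ^ 2 ≤ -⟪g k, s k⟫)
    (hbnd : ∀ k, ‖s k‖ ≤ c₂ * ‖g k‖)
    {β : ℝ} (hδβ : ∀ k, δ k ≤ β * ‖g k‖)
    {Δ t₁ t₂ : ℝ} (hΔ : Δ = c₁ ^ 2 - L' * c₂ ^ 2 * β ^ 2)
    (ht₁ : t₁ = (c₁ - Real.sqrt Δ) / (c₂ ^ 2 * L'))
    (ht₂ : t₂ = (c₁ + Real.sqrt Δ) / (c₂ ^ 2 * L'))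
    {γ : ℝ} (hγ : 0 < γ) (htk : ∀ k, t k ∈ Set.Icc (t₁ + γ) (t₂ - γ)) :
    (∀ k, F (z (k + 1)) ≤ F (z k) - (L' * c₂ ^ 2 * γ ^ 2 / 2) * ‖g k‖ ^ 2) ∧
      (∀ k, F (z (k + 1)) ≤ F (z k)) := by
  rw [mul_comm L'] at hΔ
  subst hL' hΔ ht₁ ht₂
  have hstep (k : ℕ) :
      F (z (k + 1)) ≤ F (z k) - ((L + 1) * c₂ ^ 2 * γ ^ 2 / 2) * ‖g k‖ ^ 2 := by
    rw [hupd]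
    exact inexact_descent_step_le_of_mem_Icc_roots hdiff (fun y => hlip y (z k)) hc₁.le
      ((herr k).trans (hδβ k)) (hdesc k) (hbnd k) hγ (htk k)
  have hcurv : 0 < c₂ ^ 2 * (L + 1) := (pos_and_pos_of_mem_Icc_roots hγ (htk 0)).1
  have hcoeff : 0 ≤ (L + 1) * c₂ ^ 2 * γ ^ 2 / 2 := by
    rw [mul_comm (L + 1)]
    positivity
  exact ⟨hstep, fun k => (hstep k).trans
    (sub_le_self _ (mul_nonneg hcoeff (sq_nonneg _)))⟩

/-- monotonic descent for step sizes inside the admissible interval. -/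
theorem stmt_5 (m : ℕ) (F : EuclideanSpace ℝ (Fin m) → ℝ) (L L' : ℝ)
    (hdiff : Differentiable ℝ F)
    (hlip : ∀ x y : EuclideanSpace ℝ (Fin m), ‖gradient F x - gradient F y‖ ≤ L * ‖x - y‖)
    (hL' : L' = L + 1)
    (z s g : ℕ → EuclideanSpace ℝ (Fin m)) (t δ : ℕ → ℝ)
    (c₁ c₂ : ℝ) (hc₁ : 0 < c₁) (hc₂ : 0 < c₂)
    (hδ : ∀ k, 0 ≤ δ k)
    (hupd : ∀ k, z (k + 1) = z k + t k • s k)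
    (herr : ∀ k, ‖g k - gradient F (z k)‖ ≤ δ k)
    (hdesc : ∀ k, c₁ * ‖g k‖ ^ 2 ≤ -⟪g k, s k⟫)
    (hbnd : ∀ k, ‖s k‖ ≤ c₂ * ‖g k‖)
    (β : ℝ) (hβ0 : 0 ≤ β) (hβ1 : β < c₁ / (c₂ * Real.sqrt L'))
    (hδβ : ∀ k, δ k ≤ β * ‖g k‖)
    (Δ t₁ t₂ : ℝ)
    (hΔ : Δ = c₁ ^ 2 - L' * c₂ ^ 2 * β ^ 2)
    (ht₁ : t₁ = (c₁ - Real.sqrt Δ) / (c₂ ^ 2 * L'))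
    (ht₂ : t₂ = (c₁ + Real.sqrt Δ) / (c₂ ^ 2 * L'))
    (γ : ℝ) (hγ0 : 0 < γ) (hγ1 : γ ≤ (t₂ - t₁) / 2)
    (htk : ∀ k, t k ∈ Set.Icc (t₁ + γ) (t₂ - γ)) :
    (∀ k, F (z (k + 1)) ≤ F (z k) - (L' * c₂ ^ 2 * γ ^ 2 / 2) * ‖g k‖ ^ 2) ∧
      (∀ k, F (z (k + 1)) ≤ F (z k)) :=
  stmt_5_general hdiff hlip hL' hc₁ hupd herr hdesc hbnd hδβ hΔ ht₁ ht₂ hγ0 htk
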